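/- Let M be a finitely generated ℤⁿ-graded R-module, let R' = R ⊗_K K[X_{n+1},…,X_{n+m}] and M' = M ⊗_K K[X_{n+1},…,X_{n+m}]. Then Stdepth_{R'} M' = Stdepth_R M + m. -/

import Mathlib

open MvPolynomial TensorProduct

noncomputable section

/-- The inclusion `R = K[X₁,…,Xₙ] → R' = K[X₁,…,X_{n+m}]`, `Xᵢ ↦ Xᵢ`. -/
def polyIncl (K : Type*) [Field K] (n m : ℕ) :
    MvPolynomial (Fin n) K →+* MvPolynomial (Fin (n + m)) K :=
  (MvPolynomial.rename (Fin.castAdd m)).toRingHom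

/-- `R'` as an `R`-algebra via the inclusion. -/
instance polyInclAlgebra (K : Type*) [Field K] (n m : ℕ) :
    Algebra (MvPolynomial (Fin n) K) (MvPolynomial (Fin (n + m)) K) :=
  (polyIncl K n m).toAlgebra

instance polyInclSMulComm (K : Type*) [Field K] (n m : ℕ) :
    SMulCommClass (MvPolynomial (Fin n) K) K (MvPolynomial (Fin (n + m)) K) :=
  ⟨fun r k x => by
    simp only [Algebra.smul_def]
    ring⟩

/-- `M' = M ⊗_K K[X_{n+1},…,X_{n+m}] = R' ⊗_R M`, the scalar extension of `M`. -/
abbrev scalarExt (K : Type*) [Field K] (n m : ℕ) (M : Type*) [AddCommGroup M]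
    [Module (MvPolynomial (Fin n) K) M] :=
  TensorProduct (MvPolynomial (Fin n) K) (MvPolynomial (Fin (n + m)) K) M

/-- The `ℤ^{n+m}`-grading of the scalar extension `M' = R' ⊗_R M`:  the degree-`a'`
component is spanned by the tensors `X^t ⊗ x` with `x` homogeneous of some degree
`c ∈ ℤⁿ` and `(c,0) + t = a'`. -/
def extGrading (K : Type*) [Field K] (n m : ℕ) {M : Type*} [AddCommGroup M]
    [Module K M] [Module (MvPolynomial (Fin n) K) M]
    (gr : (Fin n → ℤ) → Submodule K M) :
    (Fin (n + m) → ℤ) → Submodule K (scalarExt K n m M) := fun a' =>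
  Submodule.span K
    {z | ∃ (t : Fin (n + m) →₀ ℕ) (c : Fin n → ℤ) (x : M), x ∈ gr c ∧
      (∀ j : Fin n, c j + (t (Fin.castAdd m j) : ℤ) = a' (Fin.castAdd m j)) ∧
      (∀ j : Fin m, (t (Fin.natAdd n j) : ℤ) = a' (Fin.natAdd n j)) ∧
      z = (MvPolynomial.monomial t (1 : K)) ⊗ₜ[MvPolynomial (Fin n) K] x}

/-- The grading is compatible with the module structure over the polynomial ring:
multiplication by `Xᵢ` maps `N_a` into `N_{a+eᵢ}`. -/
def GradedSMul {K : Type*} [Field K] {ν : ℕ} {N : Type*} [AddCommGroup N]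
    [Module K N] [Module (MvPolynomial (Fin ν) K) N]
    (gr : (Fin ν → ℤ) → Submodule K N) : Prop :=
  ∀ (i : Fin ν) (a : Fin ν → ℤ), ∀ x ∈ gr a,
    (MvPolynomial.X i : MvPolynomial (Fin ν) K) • x ∈ gr (a + Pi.single i 1)

/-- A Hilbert decomposition `N ≅ ⊕_{i∈I} K[Zᵢ](−sᵢ)` as multigraded `K`-vector
spaces: in each degree `c`, `dim_K N_c` equals the number of indices `i`
with `sᵢ ⪯ c` and `c_j = (sᵢ)_j` for all `j ∉ Zᵢ`. -/
def IsHilbertDecomp {K : Type*} [Field K] {ν : ℕ} {N : Type*} [AddCommGroup N]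
    [Module K N] (gr : (Fin ν → ℤ) → Submodule K N)
    {ι : Type*} [Fintype ι] (Z : ι → Finset (Fin ν)) (s : ι → Fin ν → ℤ) : Prop :=
  ∀ c : Fin ν → ℤ, Module.rank K ↥(gr c) =
    (((Finset.univ : Finset ι).filter
      fun i => (∀ j, s i j ≤ c j) ∧ (∀ j, j ∉ Z i → c j = s i j)).card : Cardinal)

/-- The Hilbert depth: the maximum of the depths `min_i |Zᵢ|` over all Hilbert
decompositions (indexed by nonempty finite index sets `Fin (k+1)`). -/
def hdepth {K : Type*} [Field K] {ν : ℕ} {N : Type*} [AddCommGroup N]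
    [Module K N] (gr : (Fin ν → ℤ) → Submodule K N) : ℕ :=
  sSup {d | ∃ (k : ℕ) (Z : Fin (k + 1) → Finset (Fin ν)) (s : Fin (k + 1) → Fin ν → ℤ),
    IsHilbertDecomp gr Z s ∧
      d = Finset.univ.inf' Finset.univ_nonempty fun i => (Z i).card}

/-- The multigraded `K`-vector subspace `x·K[Z] ⊆ N`. -/
def stanleySpace (K : Type*) [Field K] {ν : ℕ} {N : Type*} [AddCommGroup N]
    [Module K N] [Module (MvPolynomial (Fin ν) K) N]
    (x : N) (Z : Finset (Fin ν)) : Submodule K N :=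
  Submodule.span K
    ((fun t : Fin ν →₀ ℕ => (MvPolynomial.monomial t (1 : K)) • x) ''
      {t : Fin ν →₀ ℕ | ∀ j ∉ Z, t j = 0})

/-- A Stanley decomposition `N = ⊕_{i∈I} mᵢK[Zᵢ]`: the `mᵢ` are homogeneous of
degree `sᵢ`, `K[Zᵢ] ∩ Ann(mᵢ) = 0`, and `N` is the direct sum of the multigraded
subspaces `mᵢK[Zᵢ]`. -/
def IsStanleyDecomp {K : Type*} [Field K] {ν : ℕ} {N : Type*} [AddCommGroup N]
    [Module K N] [Module (MvPolynomial (Fin ν) K) N]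
    (gr : (Fin ν → ℤ) → Submodule K N)
    {ι : Type*} [Fintype ι] (Z : ι → Finset (Fin ν)) (s : ι → Fin ν → ℤ)
    (m : ι → N) : Prop :=
  (∀ i, m i ∈ gr (s i)) ∧
  (∀ i, ∀ q ∈ MvPolynomial.supported K (↑(Z i) : Set (Fin ν)), q • m i = 0 → q = 0) ∧
  (iSupIndep fun i => stanleySpace K (m i) (Z i)) ∧
  (⨆ i, stanleySpace K (m i) (Z i)) = ⊤

/-- The Stanley depth: the maximum of the depths `min_i |Zᵢ|` over all Stanley
decompositions (indexed by nonempty finite index sets `Fin (k+1)`). -/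
def stdepth {K : Type*} [Field K] {ν : ℕ} {N : Type*} [AddCommGroup N]
    [Module K N] [Module (MvPolynomial (Fin ν) K) N]
    (gr : (Fin ν → ℤ) → Submodule K N) : ℕ :=
  sSup {d | ∃ (k : ℕ) (Z : Fin (k + 1) → Finset (Fin ν)) (s : Fin (k + 1) → Fin ν → ℤ)
    (m : Fin (k + 1) → N), IsStanleyDecomp gr Z s m ∧
      d = Finset.univ.inf' Finset.univ_nonempty fun i => (Z i).card}

/-!
Homogeneous `eᵢ` and sets of variables `Zᵢ` form a Stanley decomposition exactly when the products
`X^t eᵢ` with `X^t ∈ K[Zᵢ]` form a `K`-basis. Since `M' = ⊕_b X^b M` over the monomials `X^b` in the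
new variables, a basis of this kind for `M` becomes one for `M'` by adding the new variables to each
`Zᵢ`. Conversely, setting the new variables to `0` retracts `M'` onto its part `M` of degree `0` in
the new variables; from a basis for `M'` it keeps the `eᵢ` of degree `0` in the new variables and
kills the others, and it removes at most `m` elements from each `Zᵢ`.

A finite Stanley decomposition of `M` exists, so that the supremum defining the depth is attained:
among the homogeneous `x` outside a proper submodule `L` built so far, pick one with `L : x`
maximal. Then `X^t x ∉ L` if and only if `X^t` involves only variables `Xⱼ` with `Xⱼ x ∉ L`, which
enlarges `L` by one Stanley space.
-/

section LinearAlgebra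

variable {R V ι : Type*} [Ring R] [AddCommGroup V] [Module R V]

theorem linearIndependent_sigma_iff {κ : ι → Type*} {v : ∀ i, κ i → V} :
    LinearIndependent R (fun p : Σ i, κ i => v p.1 p.2) ↔
      (∀ i, LinearIndependent R (v i)) ∧
        iSupIndep fun i => Submodule.span R (Set.range (v i)) := by
  refine ⟨fun h => ⟨fun i => h.comp (Sigma.mk i) sigma_mk_injective, fun i => ?_⟩, fun h => ?_⟩
  · have fiber_image (j : ι) : Set.range (v j) =
        (fun p : Σ i, κ i => v p.1 p.2) '' (Sigma.fst ⁻¹' {j}) := by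
      rw [← Set.range_sigmaMk, ← Set.range_comp]
      rfl
    simp only [fiber_image, ← Submodule.span_iUnion, ← Set.image_iUnion]
    refine h.disjoint_span_image (Set.disjoint_left.2 ?_)
    rintro p rfl hp
    simp at hp
  · refine linearIndependent_iUnion_finite h.1 fun i t _ hi => (h.2 i).mono_right ?_
    exact biSup_mono fun j hj => ne_of_mem_of_not_mem hj hi

end LinearAlgebra

section Homogeneous

variable {K V δ : Type*} [Semiring K] [AddCommMonoid V] [Module K V] [DecidableEq δ]
  (gr : δ → Submodule K V) [DirectSum.Decomposition gr]

theorem isHomogeneous_span_range {ι : Type*} {v : ι → V} {d : ι → δ} (hv : ∀ i, v i ∈ gr (d i)) :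
    (Submodule.span K (Set.range v)).IsHomogeneous gr := by
  intro b y hy
  induction hy using Submodule.span_induction with
  | mem y hy =>
    obtain ⟨i, rfl⟩ := hy
    by_cases hb : d i = b
    · subst hb
      rw [DirectSum.decompose_of_mem_same gr (hv i)]
      exact Submodule.subset_span ⟨i, rfl⟩
    · rw [DirectSum.decompose_of_mem_ne gr (hv i) hb]
      exact zero_mem _
  | zero => simp
  | add y z _ _ hy hz => simpa using add_mem hy hz
  | smul c y _ hy =>
    rw [DirectSum.decompose_smul]
    exact Submodule.smul_mem _ c hy

theorem exists_homogeneous_notMem {W : Submodule K V} (hW : W ≠ ⊤) :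
    ∃ a, ∃ x ∈ gr a, x ∉ W := by
  by_contra! h
  refine hW (Submodule.eq_top_iff'.2 fun x => ?_)
  classical
  rw [← DirectSum.sum_support_decompose gr x]
  exact sum_mem fun a _ => h a _ (SetLike.coe_mem _)

end Homogeneous

theorem linearIndependent_mkQ_of_isHomogeneous {K V δ : Type*} [DivisionRing K] [AddCommGroup V]
    [Module K V] [DecidableEq δ] (gr : δ → Submodule K V) [DirectSum.Decomposition gr]
    {W : Submodule K V} (hW : W.IsHomogeneous gr) {ι : Type*} {v : ι → V} {d : ι → δ}
    (hd : Function.Injective d) (hv : ∀ i, v i ∈ gr (d i)) (hvW : ∀ i, v i ∉ W) :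
    LinearIndependent K (W.mkQ ∘ v) := by
  rw [linearIndependent_iff']
  intro S c hc i hi
  have sum_mem : ∑ j ∈ S, c j • v j ∈ W := by
    rw [← Submodule.ker_mkQ W, LinearMap.mem_ker, map_sum]
    simpa only [map_smul] using! hc
  have component : (DirectSum.decompose gr (∑ j ∈ S, c j • v j) (d i) : V) = c i • v i := by
    rw [DirectSum.decompose_sum, DFinsupp.finsetSum_apply, AddSubmonoidClass.coe_finsetSum,
      Finset.sum_eq_single_of_mem i hi fun j _ hji => DirectSum.decompose_of_mem_ne gr
        (Submodule.smul_mem _ _ (hv j)) (hd.ne hji)]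
    exact DirectSum.decompose_of_mem_same gr (Submodule.smul_mem _ _ (hv i))
  by_contra hci
  exact hvW i ((Submodule.smul_mem_iff _ hci).1 (component ▸ hW (d i) sum_mem))

theorem finsuppNat_induction {σ : Type*} {motive : (σ →₀ ℕ) → Prop} (zero : motive 0)
    (add_single : ∀ t j, motive t → motive (t + Finsupp.single j 1)) (t : σ →₀ ℕ) : motive t := by
  classical
  refine Multiset.toFinsupp.surjective.forall.2 (fun T => ?_) t
  induction T using Multiset.induction_on with
  | empty => simpa using zero
  | cons j T ih => simpa [← Multiset.singleton_add, add_comm] using add_single _ j ih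

section StanleyFamily

variable {σ : Type*}

/-- The exponent vectors of the monomials of `K[Z]`. -/
def exponentsIn (Z : Finset σ) : Set (σ →₀ ℕ) := {t | ∀ j ∉ Z, t j = 0}

theorem add_single_mem_exponentsIn {Z : Finset σ} {t : σ →₀ ℕ} {j : σ} :
    t + Finsupp.single j 1 ∈ exponentsIn Z ↔ t ∈ exponentsIn Z ∧ j ∈ Z := by
  classical
  simp only [exponentsIn, Set.mem_ofPred_eq, Finsupp.add_apply, Finsupp.single_apply]
  grind

/-- Index set of all the monomials occurring in `⊕ᵢ K[Zᵢ]`. -/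
abbrev StanleyIndex {ι : Type*} (Z : ι → Finset σ) : Type _ := Σ i, exponentsIn (Z i)

/-- The family of all products `X^t eᵢ` with `X^t ∈ K[Zᵢ]`. -/
def stanleyFamily (K : Type*) [CommSemiring K] {N : Type*} [AddCommMonoid N]
    [Module (MvPolynomial σ K) N] {ι : Type*} (Z : ι → Finset σ) (e : ι → N) :
    StanleyIndex Z → N :=
  fun p => monomial p.2.1 (1 : K) • e p.1

/-- A monomial of `⊕ᵢ K[Zᵢ] ⊕ ⊕ₖ K[Z'ₖ]` lies in one of the two halves. -/
def stanleyIndexSumEquiv {ι κ : Type*} (Z : ι → Finset σ) (Z' : κ → Finset σ) :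
    StanleyIndex Z ⊕ StanleyIndex Z' ≃ StanleyIndex (Sum.elim Z Z') :=
  (Equiv.sumSigmaDistrib fun i => (exponentsIn (Sum.elim Z Z' i) : Type _)).symm

theorem stanleyFamily_sumElim_comp_stanleyIndexSumEquiv {K : Type*} [CommSemiring K] {N : Type*}
    [AddCommMonoid N] [Module (MvPolynomial σ K) N] {ι κ : Type*} (Z : ι → Finset σ)
    (Z' : κ → Finset σ) (e : ι → N) (e' : κ → N) :
    stanleyFamily K (Sum.elim Z Z') (Sum.elim e e') ∘ stanleyIndexSumEquiv Z Z' =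
      Sum.elim (stanleyFamily K Z e) (stanleyFamily K Z' e') := by
  ext (p | p) <;> rfl

theorem mem_supported_iff_mem_restrictSupport {K : Type*} [CommSemiring K] {Z : Finset σ}
    {q : MvPolynomial σ K} :
    q ∈ supported K (Z : Set σ) ↔ q ∈ restrictSupport K (exponentsIn Z) := by
  classical
  simp only [mem_supported, mem_restrictSupport_iff, Set.subset_def, Finset.mem_coe,
    mem_vars_iff_mem_support, Finsupp.mem_support_iff, exponentsIn, Set.mem_ofPred_eq]
  grind

variable {K : Type*} [CommRing K] {N : Type*} [AddCommGroup N] [Module K N]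
  [Module (MvPolynomial σ K) N] [IsScalarTower K (MvPolynomial σ K) N]

theorem linearIndependent_monomial_smul_iff {Z : Finset σ} {x : N} :
    LinearIndependent K (fun t : exponentsIn Z => monomial t.1 (1 : K) • x) ↔
      ∀ q ∈ supported K (Z : Set σ), q • x = 0 → q = 0 := by
  let smulX : MvPolynomial σ K →ₗ[K] N :=
    (LinearMap.toSpanSingleton (MvPolynomial σ K) N x).restrictScalars K
  let monomials : exponentsIn Z → MvPolynomial σ K := fun t => monomial t.1 1
  have linearIndependent_monomials : LinearIndependent K monomials := by
    have := (basisMonomials σ K).linearIndependent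
    rw [coe_basisMonomials] at this
    exact this.comp _ Subtype.val_injective
  have span_monomials : Submodule.span K (Set.range monomials) =
      restrictSupport K (exponentsIn Z) := by
    rw [restrictSupport_eq_span, Set.image_eq_range]
  have disjoint_ker_iff : Disjoint (Submodule.span K (Set.range monomials))
      (LinearMap.ker smulX) ↔ ∀ q ∈ supported K (Z : Set σ), q • x = 0 → q = 0 := by
    simp only [span_monomials, Submodule.disjoint_def, mem_supported_iff_mem_restrictSupport,
      LinearMap.mem_ker, smulX, LinearMap.restrictScalars_apply,
      LinearMap.toSpanSingleton_apply]
  rw [← disjoint_ker_iff]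
  exact ⟨Submodule.range_ker_disjoint (f := smulX), linearIndependent_monomials.map⟩

end StanleyFamily

section StanleyBasis

variable {K : Type*} [Field K] {ν : ℕ} {N : Type*} [AddCommGroup N] [Module K N]
  [Module (MvPolynomial (Fin ν) K) N] {ι κ : Type*}
  {gr : (Fin ν → ℤ) → Submodule K N}
  {Z' : κ → Finset (Fin ν)} {s' : κ → Fin ν → ℤ} {e' : κ → N}
  {Z : ι → Finset (Fin ν)} {s : ι → Fin ν → ℤ} {e : ι → N} {W : Submodule K N}

/-- Homogeneous elements `eᵢ` of degree `sᵢ` whose multiples `X^t eᵢ`, `X^t ∈ K[Zᵢ]`, form a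
`K`-basis of the subspace `W`. For `W = ⊤` this is a Stanley decomposition. -/
structure IsStanleyBasis (gr : (Fin ν → ℤ) → Submodule K N) (Z : ι → Finset (Fin ν))
    (s : ι → Fin ν → ℤ) (e : ι → N) (W : Submodule K N) : Prop where
  mem_grading : ∀ i, e i ∈ gr (s i)
  linearIndependent : LinearIndependent K (stanleyFamily K Z e)
  span_eq : Submodule.span K (Set.range (stanleyFamily K Z e)) = W

theorem stanleySpace_eq_span_range (x : N) (Y : Finset (Fin ν)) :
    stanleySpace K x Y =
      Submodule.span K (Set.range fun t : exponentsIn Y => monomial t.1 (1 : K) • x) := by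
  rw [stanleySpace, Set.image_eq_range]
  rfl

theorem iSup_stanleySpace (Z : ι → Finset (Fin ν)) (e : ι → N) :
    ⨆ i, stanleySpace K (e i) (Z i) = Submodule.span K (Set.range (stanleyFamily K Z e)) := by
  simp only [stanleySpace_eq_span_range, ← Submodule.span_iUnion]
  exact congrArg _ (Set.range_sigma_eq_iUnion_range (stanleyFamily K Z e)).symm

theorem isStanleyDecomp_iff_isStanleyBasis_top [Fintype ι]
    [IsScalarTower K (MvPolynomial (Fin ν) K) N] :
    IsStanleyDecomp gr Z s e ↔ IsStanleyBasis gr Z s e ⊤ := by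
  have linearIndependent_iff : LinearIndependent K (stanleyFamily K Z e) ↔
      (∀ i, ∀ q ∈ supported K (Z i : Set (Fin ν)), q • e i = 0 → q = 0) ∧
        iSupIndep fun i => stanleySpace K (e i) (Z i) := by
    simp only [← linearIndependent_monomial_smul_iff, stanleySpace_eq_span_range]
    exact linearIndependent_sigma_iff (v := fun i (t : exponentsIn (Z i)) => monomial t.1 1 • e i)
  rw [IsStanleyDecomp, iSup_stanleySpace, ← and_assoc (c := _ = _), ← linearIndependent_iff]
  exact ⟨fun h => ⟨h.1, h.2.1, h.2.2⟩, fun h => ⟨h.1, h.2, h.3⟩⟩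

theorem IsStanleyBasis.nonempty [Nontrivial N] (h : IsStanleyBasis gr Z s e ⊤) : Nonempty ι := by
  by_contra hι
  rw [not_nonempty_iff] at hι
  have := h.span_eq
  rw [Set.range_eq_empty, Submodule.span_empty] at this
  exact bot_ne_top this

theorem IsStanleyBasis.sumElim (h : IsStanleyBasis gr Z s e W) (he' : ∀ k, e' k ∈ gr (s' k))
    (hli : LinearIndependent K (W.mkQ ∘ stanleyFamily K Z' e')) :
    IsStanleyBasis gr (Sum.elim Z Z') (Sum.elim s s') (Sum.elim e e')
      (W ⊔ Submodule.span K (Set.range (stanleyFamily K Z' e'))) where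
  mem_grading := by
    rintro (i | k)
    exacts [h.mem_grading i, he' k]
  linearIndependent := by
    rw [← linearIndependent_equiv (stanleyIndexSumEquiv Z Z'),
      stanleyFamily_sumElim_comp_stanleyIndexSumEquiv]
    have mem_W (p) : stanleyFamily K Z e p ∈ W := h.span_eq ▸ Submodule.subset_span ⟨p, rfl⟩
    have linearIndependent_W : LinearIndependent K fun p => (⟨_, mem_W p⟩ : W) :=
      .of_comp W.subtype h.linearIndependent
    exact linearIndependent_W.sumElim_of_quotient _ hli
  span_eq := by
    rw [← (stanleyIndexSumEquiv Z Z').surjective.range_comp,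
      stanleyFamily_sumElim_comp_stanleyIndexSumEquiv, Set.Sum.elim_range, Submodule.span_union,
      h.span_eq]

end StanleyBasis

theorem monomial_add_single_one_smul {σ R P : Type*} [CommSemiring R] [AddCommMonoid P]
    [Module (MvPolynomial σ R) P] (t : σ →₀ ℕ) (j : σ) (x : P) :
    monomial (t + Finsupp.single j 1) (1 : R) • x =
      (X j : MvPolynomial σ R) • monomial t (1 : R) • x := by
  rw [add_comm, monomial_single_add, pow_one, mul_smul]

theorem monomial_smul_notMem_iff {R σ P : Type*} [CommRing R] [AddCommGroup P]
    [Module (MvPolynomial σ R) P]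
    {L : Submodule (MvPolynomial σ R) P} {x : P} (hx : x ∉ L)
    (hcolon : ∀ t : σ →₀ ℕ, monomial t (1 : R) • x ∉ L →
      L.colon {monomial t (1 : R) • x} ≤ L.colon {x}) {Z : Finset σ}
    (hZ : ∀ j, j ∈ Z ↔ (X j : MvPolynomial σ R) • x ∉ L) (t : σ →₀ ℕ) :
    monomial t (1 : R) • x ∉ L ↔ t ∈ exponentsIn Z := by
  induction t using finsuppNat_induction with
  | zero => simpa [exponentsIn, ← C_apply] using hx
  | add_single t j ih =>
    rw [monomial_add_single_one_smul, add_single_mem_exponentsIn, hZ]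
    refine Iff.trans ?_ (and_congr_left' ih)
    refine ⟨fun h => ⟨fun ht => h (L.smul_mem _ ht), fun hj => h ?_⟩, fun h hmem => h.2 ?_⟩
    · rw [smul_comm]
      exact L.smul_mem _ hj
    · exact Submodule.mem_colon_singleton.1 (hcolon t h.1 (Submodule.mem_colon_singleton.2 hmem))

theorem restrictScalars_sup_span_singleton {R σ P : Type*} [CommRing R] [AddCommGroup P]
    [Module R P] [Module (MvPolynomial σ R) P] [IsScalarTower R (MvPolynomial σ R) P]
    {L : Submodule (MvPolynomial σ R) P} {x : P} {Z : Finset σ}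
    (hZ : ∀ t : σ →₀ ℕ, monomial t (1 : R) • x ∉ L → t ∈ exponentsIn Z) :
    (L ⊔ Submodule.span (MvPolynomial σ R) {x}).restrictScalars R =
      L.restrictScalars R ⊔
        Submodule.span R (Set.range (stanleyFamily R (fun _ : Unit => Z) fun _ => x)) := by
  rw [Submodule.restrictScalars_sup]
  refine le_antisymm (sup_le le_sup_left fun y hy => ?_)
    (sup_le_sup_left (Submodule.span_le.2 ?_) _)
  · obtain ⟨q, rfl⟩ := Submodule.mem_span_singleton.1 hy
    induction q using MvPolynomial.induction_on' with
    | monomial t c =>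
      rw [← mul_one c, ← smul_eq_mul, ← smul_monomial, smul_assoc]
      refine Submodule.smul_mem _ c ?_
      by_cases ht : monomial t (1 : R) • x ∈ L
      · exact Submodule.mem_sup_left ht
      · exact Submodule.mem_sup_right (Submodule.subset_span ⟨⟨(), t, hZ t ht⟩, rfl⟩)
    | add p q hp hq =>
      rw [add_smul]
      exact add_mem (hp (Submodule.mem_span_singleton.2 ⟨p, rfl⟩))
        (hq (Submodule.mem_span_singleton.2 ⟨q, rfl⟩))
  · rintro _ ⟨p, rfl⟩
    exact Submodule.mem_span_singleton.2 ⟨_, rfl⟩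

section Existence

variable {K : Type*} [Field K] {ν : ℕ} {N : Type*} [AddCommGroup N] [Module K N]
  [Module (MvPolynomial (Fin ν) K) N] {gr : (Fin ν → ℤ) → Submodule K N}

theorem GradedSMul.monomial_smul_mem (hsmul : GradedSMul gr) {a : Fin ν → ℤ} {x : N}
    (hx : x ∈ gr a) (t : Fin ν →₀ ℕ) :
    monomial t (1 : K) • x ∈ gr (a + fun j => (t j : ℤ)) := by
  induction t using finsuppNat_induction with
  | zero =>
    convert hx using 2
    · ext; simp
    · simp [← C_apply]
  | add_single t j ih =>
    rw [monomial_add_single_one_smul]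
    convert hsmul j _ _ ih using 2
    ext i
    simp [Finsupp.single_apply, Pi.single_apply, eq_comm, add_assoc]

theorem GradedSMul.stanleyFamily_mem (hsmul : GradedSMul gr) {ι : Type*}
    {Z : ι → Finset (Fin ν)} {s : ι → Fin ν → ℤ} {e : ι → N} (he : ∀ i, e i ∈ gr (s i))
    (p : StanleyIndex Z) : stanleyFamily K Z e p ∈ gr (s p.1 + fun j => (p.2.1 j : ℤ)) :=
  hsmul.monomial_smul_mem (he p.1) p.2.1

theorem GradedSMul.exists_maximal_colon [DirectSum.Decomposition gr] (hsmul : GradedSMul gr)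
    [IsScalarTower K (MvPolynomial (Fin ν) K) N]
    {L : Submodule (MvPolynomial (Fin ν) K) N} (hL : L ≠ ⊤) :
    ∃ a, ∃ x ∈ gr a, x ∉ L ∧ ∀ t : Fin ν →₀ ℕ, monomial t (1 : K) • x ∉ L →
      L.colon {monomial t (1 : K) • x} ≤ L.colon {x} := by
  let colons : Set (Ideal (MvPolynomial (Fin ν) K)) :=
    {I | ∃ a, ∃ x ∈ gr a, x ∉ L ∧ L.colon {x} = I}
  have hne : colons.Nonempty := by
    obtain ⟨a, x, hx, hxL⟩ := exists_homogeneous_notMem gr (W := L.restrictScalars K)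
      (by simpa using hL)
    exact ⟨_, a, x, hx, hxL, rfl⟩
  obtain ⟨_, ⟨a, x, hx, hxL, rfl⟩, hmax⟩ :=
    set_has_maximal_iff_noetherian.2 (inferInstance : IsNoetherianRing _) colons hne
  refine ⟨a, x, hx, hxL, fun t ht => ?_⟩
  have le_colon : L.colon {x} ≤ L.colon {monomial t (1 : K) • x} := fun q hq => by
    rw [Submodule.mem_colon_singleton] at hq ⊢
    rw [smul_comm]
    exact L.smul_mem _ hq
  exact (eq_of_le_of_not_lt le_colon
    (hmax _ ⟨_, _, hsmul.monomial_smul_mem hx t, ht, rfl⟩)).ge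

theorem IsStanleyBasis.exists_gt [DirectSum.Decomposition gr] (hsmul : GradedSMul gr)
    [IsScalarTower K (MvPolynomial (Fin ν) K) N] {ι : Type*} {Z : ι → Finset (Fin ν)}
    {s : ι → Fin ν → ℤ} {e : ι → N} {L : Submodule (MvPolynomial (Fin ν) K) N}
    (h : IsStanleyBasis gr Z s e (L.restrictScalars K)) (hL : L ≠ ⊤) :
    ∃ (Y : Finset (Fin ν)) (a : Fin ν → ℤ) (x : N) (L' : Submodule (MvPolynomial (Fin ν) K) N),
      L < L' ∧ IsStanleyBasis gr (Sum.elim Z fun _ : Unit => Y) (Sum.elim s fun _ => a)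
        (Sum.elim e fun _ => x) (L'.restrictScalars K) := by
  classical
  obtain ⟨a, x, hx, hxL, hcolon⟩ := hsmul.exists_maximal_colon hL
  let Y : Finset (Fin ν) := {j | (X j : MvPolynomial (Fin ν) K) • x ∉ L}
  have notMem_iff := monomial_smul_notMem_iff hxL hcolon (Z := Y) (by simp [Y])
  have isHomogeneous : (L.restrictScalars K).IsHomogeneous gr :=
    h.span_eq ▸ isHomogeneous_span_range gr (hsmul.stanleyFamily_mem h.mem_grading)
  have mem_grading := hsmul.stanleyFamily_mem (Z := fun _ : Unit => Y) fun _ => hx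
  have linearIndependent : LinearIndependent K
      ((L.restrictScalars K).mkQ ∘ stanleyFamily K (fun _ : Unit => Y) fun _ => x) := by
    refine linearIndependent_mkQ_of_isHomogeneous gr isHomogeneous ?_ mem_grading
      fun p => (notMem_iff p.2.1).2 p.2.2
    rintro ⟨⟨⟩, t, ht⟩ ⟨⟨⟩, u, hu⟩ heq
    obtain rfl : t = u := by
      ext j
      simpa using congrFun heq j
    rfl
  refine ⟨Y, a, x, L ⊔ Submodule.span _ {x}, ?_, ?_⟩
  · simpa using hxL
  · rw [restrictScalars_sup_span_singleton fun t ht => (notMem_iff t).1 ht]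
    exact h.sumElim (fun _ => hx) linearIndependent

theorem GradedSMul.exists_isStanleyBasis [DirectSum.Decomposition gr] (hsmul : GradedSMul gr)
    [IsScalarTower K (MvPolynomial (Fin ν) K) N] [Module.Finite (MvPolynomial (Fin ν) K) N] :
    ∃ (ι : Type) (_ : Finite ι) (Z : ι → Finset (Fin ν)) (s : ι → Fin ν → ℤ) (e : ι → N),
      IsStanleyBasis gr Z s e ⊤ := by
  let P (L : Submodule (MvPolynomial (Fin ν) K) N) : Prop :=
    ∃ (ι : Type) (_ : Finite ι) (Z : ι → Finset (Fin ν)) (s : ι → Fin ν → ℤ) (e : ι → N),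
      IsStanleyBasis gr Z s e (L.restrictScalars K)
  have bot : P ⊥ := ⟨Empty, inferInstance, nofun, nofun, nofun, nofun,
    linearIndependent_empty_type, by simp⟩
  obtain ⟨L, ⟨ι, hι, Z, s, e, h⟩, hmax⟩ := set_has_maximal_iff_noetherian.2
    (inferInstance : IsNoetherian (MvPolynomial (Fin ν) K) N) {L | P L} ⟨⊥, bot⟩
  obtain rfl : L = ⊤ := by
    by_contra hL
    obtain ⟨Y, a, x, L', hlt, h'⟩ := h.exists_gt hsmul hL
    exact hmax L' ⟨_, inferInstance, _, _, _, h'⟩ hlt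
  exact ⟨ι, hι, Z, s, e, h⟩

end Existence

section JoinExponents

variable {n m : ℕ}

/-- Exponent vectors `(u, b)` of `X₁,…,Xₙ` and of `X_{n+1},…,X_{n+m}`, put together. -/
def joinExponents (n m : ℕ) : (Fin n →₀ ℕ) × (Fin m →₀ ℕ) ≃ (Fin (n + m) →₀ ℕ) :=
  Finsupp.sumFinsuppEquivProdFinsupp.symm.trans (Finsupp.domCongr finSumFinEquiv).toEquiv

@[simp]
theorem joinExponents_castAdd (ub : (Fin n →₀ ℕ) × (Fin m →₀ ℕ)) (j : Fin n) :
    joinExponents n m ub (Fin.castAdd m j) = ub.1 j := by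
  simp [joinExponents]

@[simp]
theorem joinExponents_natAdd (ub : (Fin n →₀ ℕ) × (Fin m →₀ ℕ)) (j : Fin m) :
    joinExponents n m ub (Fin.natAdd n j) = ub.2 j := by
  simp [joinExponents]

theorem joinExponents_eq_mapDomain_add (ub : (Fin n →₀ ℕ) × (Fin m →₀ ℕ)) :
    joinExponents n m ub = ub.1.mapDomain (Fin.castAdd m) + ub.2.mapDomain (Fin.natAdd n) := by
  ext j
  induction j using Fin.addCases with
  | left j =>
    rw [joinExponents_castAdd, Finsupp.add_apply,
      Finsupp.mapDomain_apply (Fin.castAdd_injective n m), Finsupp.mapDomain_of_notMem_range,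
      add_zero]
    rintro ⟨i, hi⟩
    exact absurd (congrArg Fin.val hi) (by simp only [Fin.val_castAdd, Fin.val_natAdd]; omega)
  | right j =>
    rw [joinExponents_natAdd, Finsupp.add_apply,
      Finsupp.mapDomain_apply (Fin.natAdd_injective m n), Finsupp.mapDomain_of_notMem_range,
      zero_add]
    rintro ⟨i, hi⟩
    exact absurd (congrArg Fin.val hi) (by simp only [Fin.val_castAdd, Fin.val_natAdd]; omega)

theorem monomial_joinExponents {R : Type*} [CommSemiring R] (u : Fin n →₀ ℕ) (b : Fin m →₀ ℕ) :
    monomial (joinExponents n m (u, b)) (1 : R) =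
      rename (Fin.castAdd m) (monomial u 1) * rename (Fin.natAdd n) (monomial b 1) := by
  rw [rename_monomial, rename_monomial, monomial_mul, one_mul, joinExponents_eq_mapDomain_add]

/-- The variables in `Z` together with `X_{n+1},…,X_{n+m}`. -/
def extendVars (m : ℕ) (Z : Finset (Fin n)) : Finset (Fin (n + m)) :=
  (Z.disjSum Finset.univ).map finSumFinEquiv.toEmbedding

/-- The variables in `Y` among `X₁,…,Xₙ`. -/
def restrictVars (Y : Finset (Fin (n + m))) : Finset (Fin n) :=
  {j | Fin.castAdd m j ∈ Y}

theorem card_extendVars (Z : Finset (Fin n)) : (extendVars m Z).card = Z.card + m := by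
  rw [extendVars, Finset.card_map, Finset.card_disjSum, Finset.card_fin]

theorem card_le_card_restrictVars_add (Y : Finset (Fin (n + m))) :
    Y.card ≤ (restrictVars Y).card + m := by
  rw [← card_extendVars]
  refine Finset.card_le_card fun j hj => ?_
  induction j using Fin.addCases <;> simp_all [extendVars, restrictVars, finSumFinEquiv]

theorem joinExponents_mem_exponentsIn_extendVars {Z : Finset (Fin n)} {u : Fin n →₀ ℕ}
    {b : Fin m →₀ ℕ} :
    joinExponents n m (u, b) ∈ exponentsIn (extendVars m Z) ↔ u ∈ exponentsIn Z := by
  simp [exponentsIn, extendVars, Fin.forall_fin_add]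

theorem joinExponents_zero_mem_exponentsIn {Y : Finset (Fin (n + m))} {u : Fin n →₀ ℕ} :
    joinExponents n m (u, 0) ∈ exponentsIn Y ↔ u ∈ exponentsIn (restrictVars Y) := by
  simp [exponentsIn, restrictVars, Fin.forall_fin_add]

/-- A monomial of `⊕ᵢ K[Zᵢ, X_{n+1},…,X_{n+m}]` is a monomial in the last variables times one of
`⊕ᵢ K[Zᵢ]`. -/
def extendVarsIndexEquiv {ι : Type*} (Z : ι → Finset (Fin n)) :
    (Σ _ : Fin m →₀ ℕ, StanleyIndex Z) ≃ StanleyIndex fun i => extendVars m (Z i) where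
  toFun p := ⟨p.2.1, joinExponents n m (p.2.2.1, p.1),
    joinExponents_mem_exponentsIn_extendVars.2 p.2.2.2⟩
  invFun p := ⟨((joinExponents n m).symm p.2.1).2, p.1, ((joinExponents n m).symm p.2.1).1,
    (joinExponents_mem_exponentsIn_extendVars (b := ((joinExponents n m).symm p.2.1).2)).1
      (by simp)⟩
  left_inv p := by simp
  right_inv p := by simp

/-- Inclusion of the monomials of `⊕ᵢ K[Zᵢ ∩ {X₁,…,Xₙ}]`, `i` subject to `P`, into those of
`⊕ᵢ K[Zᵢ]`. -/
def restrictVarsIndexEmbedding {ι : Type*} (Z : ι → Finset (Fin (n + m))) (P : ι → Prop) :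
    (StanleyIndex fun i : Subtype P => restrictVars (Z i)) ↪ StanleyIndex Z where
  toFun p := ⟨p.1, joinExponents n m (p.2.1, 0), joinExponents_zero_mem_exponentsIn.2 p.2.2⟩
  inj' := by
    rintro ⟨⟨i, hi⟩, u, hu⟩ ⟨⟨i', hi'⟩, u', hu'⟩ heq
    obtain ⟨rfl, heq⟩ := Sigma.mk.inj_iff.1 heq
    obtain rfl : u = u' := by simpa using heq
    rfl

end JoinExponents

/-- A basis of `A` over `R` and a basis of `M` over `K` give a basis of `A ⊗[R] M` over `K`. -/
def tmulBasis {K R A M κ ι : Type*} [CommSemiring K] [CommSemiring R] [Algebra K R]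
    [AddCommMonoid A] [Module R A] [Module K A] [IsScalarTower K R A] [SMulCommClass R K A]
    [AddCommMonoid M] [Module R M] [Module K M] [IsScalarTower K R M]
    (𝒜 : Module.Basis κ R A) (ℬ : Module.Basis ι K M) :
    Module.Basis (Σ _ : κ, ι) K (A ⊗[R] M) :=
  (Finsupp.basis fun _ => ℬ).map
    ((haveI := Classical.decEq κ; TensorProduct.equivFinsuppOfBasisLeft 𝒜).restrictScalars K).symm

@[simp]
theorem tmulBasis_apply {K R A M κ ι : Type*} [CommSemiring K] [CommSemiring R] [Algebra K R]
    [AddCommMonoid A] [Module R A] [Module K A] [IsScalarTower K R A] [SMulCommClass R K A]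
    [AddCommMonoid M] [Module R M] [Module K M] [IsScalarTower K R M]
    (𝒜 : Module.Basis κ R A) (ℬ : Module.Basis ι K M) (p : Σ _ : κ, ι) :
    tmulBasis 𝒜 ℬ p = 𝒜 p.1 ⊗ₜ ℬ p.2 := by
  simp [tmulBasis]

section ScalarExtension

variable {K : Type*} [Field K] {n m : ℕ}

theorem algebraMap_eq_rename (p : MvPolynomial (Fin n) K) :
    algebraMap _ (MvPolynomial (Fin (n + m)) K) p = rename (Fin.castAdd m) p :=
  rfl

instance polyIncl_isScalarTower :
    IsScalarTower K (MvPolynomial (Fin n) K) (MvPolynomial (Fin (n + m)) K) :=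
  .of_algebraMap_eq fun c => (rename_C (Fin.castAdd m) c).symm

/-- `R'` as the ring of polynomials in `X_{n+1},…,X_{n+m}` over `R`. -/
def lastVarsAlgEquiv (K : Type*) [Field K] (n m : ℕ) :
    MvPolynomial (Fin (n + m)) K ≃ₐ[MvPolynomial (Fin n) K]
      MvPolynomial (Fin m) (MvPolynomial (Fin n) K) :=
  let e := (renameEquiv K (finSumFinEquiv.symm.trans (Equiv.sumComm _ _))).trans
    (sumAlgEquiv K (Fin m) (Fin n))
  have comp_rename : e.toAlgHom.comp (rename (Fin.castAdd m)) =
      IsScalarTower.toAlgHom K (MvPolynomial (Fin n) K) _ := by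
    ext : 1
    simp [e]
  AlgEquiv.ofRingEquiv (f := e.toRingEquiv) (DFunLike.congr_fun comp_rename)

theorem lastVarsAlgEquiv_rename_natAdd (q : MvPolynomial (Fin m) K) :
    lastVarsAlgEquiv K n m (rename (Fin.natAdd n) q) = map C q := by
  change sumAlgEquiv K (Fin m) (Fin n) (rename _ (rename _ q)) = _
  induction q using MvPolynomial.induction_on with
  | C c => simp
  | add p q hp hq => simp only [map_add, hp, hq]
  | mul_X p j hp => rw [map_mul, map_mul, map_mul, hp]; simp

/-- The monomials in `X_{n+1},…,X_{n+m}` as an `R`-basis of `R'`. -/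
def lastVarsBasis (K : Type*) [Field K] (n m : ℕ) :
    Module.Basis (Fin m →₀ ℕ) (MvPolynomial (Fin n) K) (MvPolynomial (Fin (n + m)) K) :=
  (basisMonomials (Fin m) (MvPolynomial (Fin n) K)).map (lastVarsAlgEquiv K n m).symm.toLinearEquiv

theorem lastVarsBasis_apply (b : Fin m →₀ ℕ) :
    lastVarsBasis K n m b = rename (Fin.natAdd n) (monomial b (1 : K)) := by
  rw [lastVarsBasis, Module.Basis.map_apply, coe_basisMonomials, AlgEquiv.toLinearEquiv_apply,
    AlgEquiv.symm_apply_eq, lastVarsAlgEquiv_rename_natAdd, map_monomial, map_one]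

/-- The retraction `R' → R` sending `X_{n+1},…,X_{n+m}` to `0`. -/
def killLastVars (K : Type*) [Field K] (n m : ℕ) :
    MvPolynomial (Fin (n + m)) K →ₐ[MvPolynomial (Fin n) K] MvPolynomial (Fin n) K where
  __ := aeval (R := K) (Fin.append X 0)
  commutes' p := by
    have append_comp : (Fin.append X (0 : Fin m → MvPolynomial (Fin n) K)) ∘ Fin.castAdd m = X := by
      ext1 j
      exact Fin.append_left _ _ j
    change aeval _ (rename _ p) = p
    rw [aeval_rename, append_comp, aeval_X_left_apply]

theorem killLastVars_rename_natAdd (q : MvPolynomial (Fin m) K) :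
    killLastVars K n m (rename (Fin.natAdd n) q) = C (constantCoeff q) := by
  have append_comp : (Fin.append X (0 : Fin m → MvPolynomial (Fin n) K)) ∘ Fin.natAdd n = 0 := by
    ext1 j
    exact Fin.append_right _ _ j
  change aeval _ (rename _ q) = _
  rw [aeval_rename, append_comp, aeval_zero, algebraMap_eq]

theorem killLastVars_monomial_joinExponents (u : Fin n →₀ ℕ) (b : Fin m →₀ ℕ) :
    killLastVars K n m (monomial (joinExponents n m (u, b)) 1) =
      if b = 0 then monomial u 1 else 0 := by
  rw [monomial_joinExponents, map_mul, ← algebraMap_eq_rename, AlgHom.commutes,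
    Algebra.algebraMap_self_apply, killLastVars_rename_natAdd, constantCoeff_monomial]
  split_ifs <;> simp

variable {M : Type*} [AddCommGroup M] [Module (MvPolynomial (Fin n) K) M]

/-- The retraction `M' → M` of `x ↦ 1 ⊗ x` induced by `killLastVars`. -/
def scalarExtRetraction (K : Type*) [Field K] (n m : ℕ) (M : Type*) [AddCommGroup M]
    [Module (MvPolynomial (Fin n) K) M] : scalarExt K n m M →ₗ[MvPolynomial (Fin n) K] M :=
  (TensorProduct.lid _ M).toLinearMap ∘ₗ (killLastVars K n m).toLinearMap.rTensor M

@[simp]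
theorem scalarExtRetraction_tmul (q : MvPolynomial (Fin (n + m)) K) (x : M) :
    scalarExtRetraction K n m M (q ⊗ₜ x) = killLastVars K n m q • x := by
  simp [scalarExtRetraction]

theorem scalarExtRetraction_smul (q : MvPolynomial (Fin (n + m)) K) (z : scalarExt K n m M) :
    scalarExtRetraction K n m M (q • z) = killLastVars K n m q • scalarExtRetraction K n m M z := by
  induction z using TensorProduct.induction_on with
  | zero => simp
  | tmul p x => simp [smul_tmul', mul_smul]
  | add y z hy hz => simp [hy, hz]

theorem scalarExtRetraction_surjective : Function.Surjective (scalarExtRetraction K n m M) :=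
  fun x => ⟨1 ⊗ₜ x, by simp⟩

theorem monomial_joinExponents_tmul (u : Fin n →₀ ℕ) (b : Fin m →₀ ℕ) (x : M) :
    monomial (joinExponents n m (u, b)) (1 : K) ⊗ₜ[MvPolynomial (Fin n) K] x =
      rename (Fin.natAdd n) (monomial b (1 : K)) ⊗ₜ (monomial u (1 : K) • x) := by
  rw [monomial_joinExponents, ← algebraMap_eq_rename, ← Algebra.smul_def, smul_tmul]

theorem monomial_joinExponents_zero_tmul (u : Fin n →₀ ℕ) (x : M) :
    monomial (joinExponents n m (u, 0)) (1 : K) ⊗ₜ[MvPolynomial (Fin n) K] x =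
      1 ⊗ₜ (monomial u (1 : K) • x) := by
  rw [monomial_joinExponents_tmul, monomial_zero', C_1, map_one]

variable [Module K M] {gr : (Fin n → ℤ) → Submodule K M} {a : Fin (n + m) → ℤ}
  {z : scalarExt K n m M}

theorem extGrading_le {W : Submodule K (scalarExt K n m M)}
    (hW : ∀ (u : Fin n →₀ ℕ) (b : Fin m →₀ ℕ) (c : Fin n → ℤ), ∀ x ∈ gr c,
      a = Fin.append (c + fun j => (u j : ℤ)) (fun j => (b j : ℤ)) →
      monomial (joinExponents n m (u, b)) (1 : K) ⊗ₜ x ∈ W) :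
    extGrading K n m gr a ≤ W := by
  refine Submodule.span_le.2 ?_
  rintro _ ⟨t, c, x, hx, hhead, htail, rfl⟩
  obtain ⟨⟨u, b⟩, rfl⟩ := (joinExponents n m).surjective t
  refine hW u b c x hx (funext fun j => ?_)
  induction j using Fin.addCases with
  | left j => simpa using (hhead j).symm
  | right j => simpa using (htail j).symm

theorem one_tmul_mem_extGrading {c : Fin n → ℤ} {x : M} (hx : x ∈ gr c) :
    (1 : MvPolynomial (Fin (n + m)) K) ⊗ₜ x ∈ extGrading K n m gr (Fin.append c 0) :=
  Submodule.subset_span ⟨0, c, x, hx, by simp, by simp, rfl⟩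

variable [IsScalarTower K (MvPolynomial (Fin n) K) M]

theorem GradedSMul.scalarExtRetraction_mem (hsmul : GradedSMul gr)
    (hz : z ∈ extGrading K n m gr a) :
    scalarExtRetraction K n m M z ∈ gr fun j => a (Fin.castAdd m j) := by
  refine extGrading_le (W := (gr _).comap ((scalarExtRetraction K n m M).restrictScalars K)) ?_ hz
  rintro u b c x hx rfl
  simp only [Submodule.mem_comap, LinearMap.restrictScalars_apply, scalarExtRetraction_tmul,
    killLastVars_monomial_joinExponents, Fin.append_left, ite_smul, zero_smul]
  split_ifs
  · exact hsmul.monomial_smul_mem hx u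
  · exact zero_mem _

theorem scalarExtRetraction_eq_zero (ha : ∃ j, a (Fin.natAdd n j) ≠ 0)
    (hz : z ∈ extGrading K n m gr a) :
    scalarExtRetraction K n m M z = 0 := by
  refine extGrading_le (W := LinearMap.ker ((scalarExtRetraction K n m M).restrictScalars K)) ?_ hz
  rintro u b c x - rfl
  have hb : b ≠ 0 := by
    rintro rfl
    simp at ha
  simp [killLastVars_monomial_joinExponents, hb]

theorem one_tmul_scalarExtRetraction (ha : ∀ j, a (Fin.natAdd n j) = 0)
    (hz : z ∈ extGrading K n m gr a) :
    (1 : MvPolynomial (Fin (n + m)) K) ⊗ₜ scalarExtRetraction K n m M z = z := by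
  let incl : M →ₗ[MvPolynomial (Fin n) K] scalarExt K n m M := TensorProduct.mk _ _ M 1
  refine extGrading_le (W := LinearMap.eqLocus
    ((incl ∘ₗ scalarExtRetraction K n m M).restrictScalars K) LinearMap.id) ?_ hz
  rintro u b c x - rfl
  obtain rfl : b = 0 := by
    ext j
    simpa using ha j
  simp [incl, monomial_joinExponents_zero_tmul]

theorem one_tmul_monomial_smul_scalarExtRetraction (ha : ∀ j, a (Fin.natAdd n j) = 0)
    (hz : z ∈ extGrading K n m gr a) (u : Fin n →₀ ℕ) :
    (1 : MvPolynomial (Fin (n + m)) K) ⊗ₜ (monomial u (1 : K) • scalarExtRetraction K n m M z) =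
      monomial (joinExponents n m (u, 0)) (1 : K) • z := by
  conv_rhs => rw [← one_tmul_scalarExtRetraction ha hz]
  rw [smul_tmul', smul_eq_mul, mul_one, monomial_joinExponents_zero_tmul]

variable {ι : Type*}

theorem IsStanleyBasis.extend {Z : ι → Finset (Fin n)} {s : ι → Fin n → ℤ} {e : ι → M}
    (h : IsStanleyBasis gr Z s e ⊤) :
    IsStanleyBasis (extGrading K n m gr) (fun i => extendVars m (Z i))
      (fun i => Fin.append (s i) 0) (fun i => 1 ⊗ₜ e i) ⊤ := by
  let B : Module.Basis (StanleyIndex Z) K M := .mk h.linearIndependent h.span_eq.ge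
  let B' : Module.Basis (StanleyIndex fun i => extendVars m (Z i)) K (scalarExt K n m M) :=
    (tmulBasis (lastVarsBasis K n m) B).reindex (extendVarsIndexEquiv Z)
  have coe_B' : ⇑B' = stanleyFamily K (fun i => extendVars m (Z i)) fun i => 1 ⊗ₜ e i := by
    refine (extendVarsIndexEquiv Z).surjective.injective_comp_right ?_
    ext ⟨b, i, u, hu⟩
    simp [B', B, stanleyFamily, extendVarsIndexEquiv, lastVarsBasis_apply, smul_tmul',
      monomial_joinExponents_tmul]
  exact ⟨fun i => one_tmul_mem_extGrading (h.mem_grading i), coe_B' ▸ B'.linearIndependent,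
    coe_B' ▸ B'.span_eq⟩

theorem IsStanleyBasis.restrict (hsmul : GradedSMul gr) {Z : ι → Finset (Fin (n + m))}
    {s : ι → Fin (n + m) → ℤ} {e : ι → scalarExt K n m M}
    (h : IsStanleyBasis (extGrading K n m gr) Z s e ⊤) :
    IsStanleyBasis gr (fun i : {i // ∀ j, s i (Fin.natAdd n j) = 0} => restrictVars (Z i))
      (fun i j => s i (Fin.castAdd m j)) (fun i => scalarExtRetraction K n m M (e i)) ⊤ where
  mem_grading i := hsmul.scalarExtRetraction_mem (h.mem_grading i)
  linearIndependent := by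
    let incl : M →ₗ[K] scalarExt K n m M :=
      (TensorProduct.mk (MvPolynomial (Fin n) K) _ M 1).restrictScalars K
    have incl_comp_stanleyFamily :
        incl ∘ stanleyFamily K (fun i : {i // ∀ j, s i (Fin.natAdd n j) = 0} => restrictVars (Z i))
          (fun i => scalarExtRetraction K n m M (e i)) =
        stanleyFamily K Z e ∘ restrictVarsIndexEmbedding Z _ :=
      funext fun p => one_tmul_monomial_smul_scalarExtRetraction (z := e p.1) p.1.2
        (h.mem_grading p.1) p.2.1
    refine .of_comp incl ?_
    rw [incl_comp_stanleyFamily]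
    exact h.linearIndependent.comp _ (restrictVarsIndexEmbedding Z _).injective
  span_eq := by
    let π := (scalarExtRetraction K n m M).restrictScalars K
    have range_eq_top : LinearMap.range π = ⊤ :=
      LinearMap.range_eq_top.2 scalarExtRetraction_surjective
    rw [← top_le_iff, ← range_eq_top, ← Submodule.map_top, ← h.span_eq, Submodule.map_span_le]
    rintro _ ⟨⟨i, t, ht⟩, rfl⟩
    obtain ⟨⟨u, b⟩, rfl⟩ := (joinExponents n m).surjective t
    change scalarExtRetraction K n m M (monomial _ (1 : K) • e i) ∈ _
    rw [scalarExtRetraction_smul, killLastVars_monomial_joinExponents]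
    split_ifs with hb
    · subst hb
      by_cases hi : ∀ j, s i (Fin.natAdd n j) = 0
      · exact Submodule.subset_span ⟨⟨⟨i, hi⟩, u, joinExponents_zero_mem_exponentsIn.1 ht⟩, rfl⟩
      · rw [scalarExtRetraction_eq_zero (not_forall.1 hi) (h.mem_grading i), smul_zero]
        exact zero_mem _
    · rw [zero_smul]
      exact zero_mem _

end ScalarExtension

section Stdepth

variable {K : Type*} [Field K] {ν : ℕ} {N : Type*} [AddCommGroup N] [Module K N]
  [Module (MvPolynomial (Fin ν) K) N] {gr : (Fin ν → ℤ) → Submodule K N} {d : ℕ}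

variable (gr) in
/-- `N` has a finite Stanley decomposition of depth at least `d`. -/
def HasStanleyBasisOfDepth (d : ℕ) : Prop :=
  ∃ (ι : Type) (_ : Finite ι) (Z : ι → Finset (Fin ν)) (s : ι → Fin ν → ℤ) (e : ι → N),
    IsStanleyBasis gr Z s e ⊤ ∧ ∀ i, d ≤ (Z i).card

variable (gr) in
/-- The set of depths of Stanley decompositions of `N`, whose supremum is `stdepth gr`. -/
def stanleyDepths : Set ℕ :=
  {d | ∃ (k : ℕ) (Z : Fin (k + 1) → Finset (Fin ν)) (s : Fin (k + 1) → Fin ν → ℤ)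
    (e : Fin (k + 1) → N), IsStanleyDecomp gr Z s e ∧
      d = Finset.univ.inf' Finset.univ_nonempty fun i => (Z i).card}

theorem bddAbove_stanleyDepths : BddAbove (stanleyDepths gr) := by
  refine ⟨ν, ?_⟩
  rintro _ ⟨k, Z, s, e, -, rfl⟩
  calc Finset.univ.inf' Finset.univ_nonempty (fun i => (Z i).card)
      ≤ (Z 0).card := Finset.inf'_le _ (Finset.mem_univ 0)
    _ ≤ ν := card_finset_fin_le _

theorem IsStanleyBasis.reindex {ι κ : Type*} {Z : ι → Finset (Fin ν)} {s : ι → Fin ν → ℤ}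
    {e : ι → N} {W : Submodule K N} (h : IsStanleyBasis gr Z s e W) (σ : κ ≃ ι) :
    IsStanleyBasis gr (Z ∘ σ) (s ∘ σ) (e ∘ σ) W := by
  let τ : StanleyIndex (Z ∘ σ) ≃ StanleyIndex Z :=
    σ.sigmaCongrLeft (β := fun i => (exponentsIn (Z i) : Type _))
  have family_eq : stanleyFamily K (Z ∘ σ) (e ∘ σ) = stanleyFamily K Z e ∘ τ := rfl
  refine ⟨fun k => h.mem_grading (σ k), ?_, ?_⟩
  · rw [family_eq]
    exact h.linearIndependent.comp τ τ.injective
  · rw [family_eq, τ.surjective.range_comp, h.span_eq]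

theorem HasStanleyBasisOfDepth.mono {d' : ℕ} (h : HasStanleyBasisOfDepth gr d) (hle : d' ≤ d) :
    HasStanleyBasisOfDepth gr d' := by
  obtain ⟨ι, hι, Z, s, e, hbasis, hcard⟩ := h
  exact ⟨ι, hι, Z, s, e, hbasis, fun i => hle.trans (hcard i)⟩

variable [IsScalarTower K (MvPolynomial (Fin ν) K) N]

theorem HasStanleyBasisOfDepth.of_mem_stanleyDepths (hd : d ∈ stanleyDepths gr) :
    HasStanleyBasisOfDepth gr d := by
  obtain ⟨k, Z, s, e, h, rfl⟩ := hd
  exact ⟨Fin (k + 1), inferInstance, Z, s, e, isStanleyDecomp_iff_isStanleyBasis_top.1 h,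
    fun i => Finset.inf'_le _ (Finset.mem_univ i)⟩

theorem HasStanleyBasisOfDepth.exists_mem_stanleyDepths [Nontrivial N]
    (h : HasStanleyBasisOfDepth gr d) : ∃ d' ∈ stanleyDepths gr, d ≤ d' := by
  obtain ⟨ι, _, Z, s, e, hbasis, hcard⟩ := h
  have := hbasis.nonempty
  obtain ⟨k, ⟨σ⟩⟩ : ∃ k, Nonempty (Fin (k + 1) ≃ ι) := by
    obtain ⟨k, hk⟩ := Nat.exists_eq_add_one.2 (Nat.card_pos (α := ι))
    exact ⟨k, ⟨(Finite.equivFinOfCardEq hk).symm⟩⟩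
  exact ⟨_, ⟨k, _, _, _, isStanleyDecomp_iff_isStanleyBasis_top.2 (hbasis.reindex σ), rfl⟩,
    Finset.le_inf' _ _ fun i _ => hcard (σ i)⟩

theorem HasStanleyBasisOfDepth.le_stdepth [Nontrivial N] (h : HasStanleyBasisOfDepth gr d) :
    d ≤ stdepth gr := by
  obtain ⟨d', hd', hle⟩ := h.exists_mem_stanleyDepths
  exact hle.trans (le_csSup bddAbove_stanleyDepths hd')

theorem HasStanleyBasisOfDepth.hasStanleyBasisOfDepth_stdepth [Nontrivial N]
    (h : HasStanleyBasisOfDepth gr d) : HasStanleyBasisOfDepth gr (stdepth gr) := by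
  obtain ⟨d', hd', -⟩ := h.exists_mem_stanleyDepths
  exact .of_mem_stanleyDepths (Nat.sSup_mem ⟨d', hd'⟩ bddAbove_stanleyDepths)

end Stdepth

theorem GradedSMul.hasStanleyBasisOfDepth_extGrading_iff {K : Type*} [Field K] {n m d : ℕ}
    {M : Type*} [AddCommGroup M] [Module K M] [Module (MvPolynomial (Fin n) K) M]
    [IsScalarTower K (MvPolynomial (Fin n) K) M] {gr : (Fin n → ℤ) → Submodule K M}
    (hsmul : GradedSMul gr) :
    HasStanleyBasisOfDepth (extGrading K n m gr) (d + m) ↔ HasStanleyBasisOfDepth gr d := by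
  constructor
  · rintro ⟨ι, _, Z, s, e, h, hcard⟩
    exact ⟨_, inferInstance, _, _, _, h.restrict hsmul, fun i => Nat.le_of_add_le_add_right
      ((hcard i).trans (card_le_card_restrictVars_add (Z i)))⟩
  · rintro ⟨ι, hι, Z, s, e, h, hcard⟩
    exact ⟨ι, hι, _, _, _, h.extend, fun i => by simpa [card_extendVars] using hcard i⟩

/-- **Proposition.**  Let `M` be a finitely generated multigraded module over
`R = K[X₁,…,Xₙ]` and `M' = M ⊗_K K[X_{n+1},…,X_{n+m}]` (with its `ℤ^{n+m}`-grading)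
the module over `R' = K[X₁,…,X_{n+m}]` obtained by scalar extension.  Then
`Stdepth_{R'} M' = Stdepth_R M + m`. -/
theorem stdepth_scalarExtension
    {K : Type*} [Field K] {n m : ℕ}
    (M : Type*) [AddCommGroup M] [Module K M]
    [Module (MvPolynomial (Fin n) K) M]
    [IsScalarTower K (MvPolynomial (Fin n) K) M]
    [Module.Finite (MvPolynomial (Fin n) K) M] [Nontrivial M]
    (gr : (Fin n → ℤ) → Submodule K M) [DirectSum.Decomposition gr]
    (hsmul : GradedSMul gr) :
    stdepth (extGrading K n m gr) = stdepth gr + m := by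
  have : Nontrivial (scalarExt K n m M) := scalarExtRetraction_surjective.nontrivial
  have has_gr : HasStanleyBasisOfDepth gr (stdepth gr) := by
    obtain ⟨ι, hι, Z, s, e, h⟩ := hsmul.exists_isStanleyBasis
    exact HasStanleyBasisOfDepth.hasStanleyBasisOfDepth_stdepth (d := 0)
      ⟨ι, hι, Z, s, e, h, fun i => Nat.zero_le _⟩
  have has_ext : HasStanleyBasisOfDepth (extGrading K n m gr) (stdepth gr + m) :=
    hsmul.hasStanleyBasisOfDepth_extGrading_iff.2 has_gr
  refine le_antisymm ?_ has_ext.le_stdepth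
  by_contra! hlt
  have has_succ : HasStanleyBasisOfDepth (extGrading K n m gr) (stdepth gr + 1 + m) :=
    has_ext.hasStanleyBasisOfDepth_stdepth.mono (by omega)
  exact (hsmul.hasStanleyBasisOfDepth_extGrading_iff.1 has_succ).le_stdepth.not_gt
    (Nat.lt_succ_self _)
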